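/- Let F be a field with char F ≠ 2 and let H be the Highwater algebra over F. The F-linear map σ : H → H determined by σ(a_j) = a_{1−j} for all j ∈ ℤ and σ(s_j) = s_j for all j ≥ 1 is an algebra automorphism of H of order 2 which interchanges the axes a_0 and a_1. -/

import Mathlib

/- STATEMENT 7: the map σ : a_j ↦ a_{1-j}, s_j ↦ s_j is an algebra automorphism of\nthe Highwater algebra of order 2 interchanging a_0 and a_1. -/

/-- The underlying vector space of the Highwater algebra: formal `F`-linear combinations
of basis elements `a_i` (`i : ℤ`, encoded `Sum.inl i`) and `s_j` (`j ≥ 1`, encoded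
`Sum.inr (j - 1)`). -/
abbrev HW (F : Type*) [Field F] := (ℤ ⊕ ℕ) →₀ F

variable (F : Type*) [Field F]

/-- The axis `a_i` of the Highwater algebra. -/
noncomputable def hwa (i : ℤ) : HW F := Finsupp.single (Sum.inl i) 1

/-- The element `s_j` of the Highwater algebra (`s_0 = 0`). -/
noncomputable def hws : ℕ → HW F
  | 0 => 0
  | j + 1 => Finsupp.single (Sum.inr j) 1

/-- Product of two basis elements of the Highwater algebra:
`a_i · a_k = (1/2)(a_i + a_k) + s_{|i-k|}`,
`a_i · s_j = -(3/4) a_i + (3/8)(a_{i-j} + a_{i+j}) + (3/2) s_j`,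
`s_j · s_k = (3/4)(s_j + s_k) - (3/8)(s_{|j-k|} + s_{j+k})`. -/
noncomputable def hwBM : ℤ ⊕ ℕ → ℤ ⊕ ℕ → HW F
  | Sum.inl i, Sum.inl k => ((1 : F) / 2) • (hwa F i + hwa F k) + hws F (i - k).natAbs
  | Sum.inl i, Sum.inr j =>
      (-(3 : F) / 4) • hwa F i
        + ((3 : F) / 8) • (hwa F (i - ((j : ℤ) + 1)) + hwa F (i + ((j : ℤ) + 1)))
        + ((3 : F) / 2) • hws F (j + 1)
  | Sum.inr j, Sum.inl i =>
      (-(3 : F) / 4) • hwa F i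
        + ((3 : F) / 8) • (hwa F (i - ((j : ℤ) + 1)) + hwa F (i + ((j : ℤ) + 1)))
        + ((3 : F) / 2) • hws F (j + 1)
  | Sum.inr j, Sum.inr k =>
      ((3 : F) / 4) • (hws F (j + 1) + hws F (k + 1))
        - ((3 : F) / 8) • (hws F ((j : ℤ) - (k : ℤ)).natAbs + hws F (j + k + 2))

/-- The multiplication of the Highwater algebra: the bilinear extension of `hwBM`. -/
noncomputable def hwMul (x y : HW F) : HW F :=
  x.sum fun i ci => y.sum fun j cj => (ci * cj) • hwBM F i j

/-- The permutation of the basis that sends `a_j` to `a_{1-j}` and fixes every `s_j`. -/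
def hwReflect : ℤ ⊕ ℕ → ℤ ⊕ ℕ := Sum.map (fun j => 1 - j) id

theorem hwReflect_involutive : Function.Involutive hwReflect := by
  rintro (i | j) <;> simp [hwReflect]

theorem mapDomain_hwReflect_hwa (j : ℤ) :
    Finsupp.mapDomain hwReflect (hwa F j) = hwa F (1 - j) := by
  simp [hwa, hwReflect, Finsupp.mapDomain_single]

theorem mapDomain_hwReflect_hws (j : ℕ) :
    Finsupp.mapDomain hwReflect (hws F j) = hws F j := by
  cases j <;> simp [hws, hwReflect, Finsupp.mapDomain_single]

theorem mapDomain_hwReflect_hwBM (p q : ℤ ⊕ ℕ) :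
    Finsupp.mapDomain hwReflect (hwBM F p q) = hwBM F (hwReflect p) (hwReflect q) := by
  have hsub (i k : ℤ) : 1 - (i - k) = 1 - i + k := by ring
  have hadd (i k : ℤ) : 1 - (i + k) = 1 - i - k := by ring
  have habs (i k : ℤ) : (1 - i - (1 - k)).natAbs = (i - k).natAbs := by omega
  simp only [← Finsupp.lmapDomain_apply F F]
  rcases p with i | j <;> rcases q with k | l <;>
    simp only [hwBM, map_add, map_sub, map_smul, Finsupp.lmapDomain_apply,
      mapDomain_hwReflect_hwa, mapDomain_hwReflect_hws] <;>
    simp only [hwReflect, Sum.map_inl, Sum.map_inr, id, hsub, hadd, habs, add_comm]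

theorem mapDomain_hwReflect_hwMul (x y : HW F) :
    Finsupp.mapDomain hwReflect (hwMul F x y) =
      hwMul F (Finsupp.mapDomain hwReflect x) (Finsupp.mapDomain hwReflect y) := by
  have hinj := hwReflect_involutive.injective
  simp only [hwMul, Finsupp.sum_mapDomain_index_inj hinj, ← mapDomain_hwReflect_hwBM]
  simp only [← Finsupp.lmapDomain_apply F F, map_finsuppSum, map_smul]

theorem highwater_extra_symmetry (h2 : ringChar F ≠ 2) :
    ∃ T : HW F →ₗ[F] HW F,
      (∀ j : ℤ, T (hwa F j) = hwa F (1 - j)) ∧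
      (∀ j : ℕ, 1 ≤ j → T (hws F j) = hws F j) ∧
      (∀ x y : HW F, T (hwMul F x y) = hwMul F (T x) (T y)) ∧
      (∀ x : HW F, T (T x) = x) ∧
      T ≠ LinearMap.id ∧
      T (hwa F 0) = hwa F 1 ∧ T (hwa F 1) = hwa F 0 := by
  refine ⟨Finsupp.lmapDomain F F hwReflect, mapDomain_hwReflect_hwa F,
    fun j _ => mapDomain_hwReflect_hws F j, mapDomain_hwReflect_hwMul F, fun x => ?_,
    fun h => ?_, ?_, ?_⟩
  · simp only [Finsupp.lmapDomain_apply, ← Finsupp.mapDomain_comp,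
      hwReflect_involutive.comp_self, Finsupp.mapDomain_id]
  · have h01 : hwa F (1 - 0) = hwa F 0 :=
      (mapDomain_hwReflect_hwa F 0).symm.trans (LinearMap.congr_fun h (hwa F 0))
    simp [hwa, Finsupp.single_left_inj] at h01
  · simpa using mapDomain_hwReflect_hwa F 0
  · simpa using mapDomain_hwReflect_hwa F 1
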